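/- arXiv:2303.07288 — 5 statements merged into one kernel-verified Lean document; each statement's English description precedes it below -/
import Mathlib

section
/- Let (U_1,…,U_t) be F_q-subspaces of F_{q^m}^k with dim_{F_q} U_i = n_i which together span F_{q^m}^k over F_{q^m}, and suppose that U_1 ∩ … ∩ U_t contains no 1-dimensional F_{q^m}-subspace of F_{q^m}^k. Then the dual subspaces U_1^{⊥'},…,U_t^{⊥'} satisfy dim_{F_q} U_i^{⊥'} = km − n_i and together span F_{q^m}^k over F_{q^m}; i.e., (U_1^{⊥'},…,U_t^{⊥'}) is an [(km−n_1,…,km−n_t),k]_{q^m/q}-system. -/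
/-!
The form `σ'(x, y) = Tr (x ⬝ᵥ y)` is symmetric and nondegenerate over `Fq`, because the trace form
of a finite (hence separable) extension of finite fields is nondegenerate. This gives
`dim U^⊥' = km - dim U` and `U^⊥'^⊥' = U`.

If the `U_i^⊥'` did not span over `Fqm`, they would lie in a hyperplane, that is, in the kernel of
`y ↦ v ⬝ᵥ y` for some `v ≠ 0`. Every `Fqm`-multiple of `v` is then `σ'`-orthogonal to each
`U_i^⊥'`, so the line through `v` lies in `U_i^⊥'^⊥' = U_i` for all `i`, which is excluded.
-/

open Module Submodule

/-- The rank over `Fq` of a vector with entries in `Fqm`: the `Fq`-dimension of the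
`Fq`-span of its entries. -/
noncomputable def rk (Fq : Type) [Field Fq] {Fqm : Type} [Field Fqm] [Algebra Fq Fqm]
    {n : ℕ} (v : Fin n → Fqm) : ℕ :=
  Module.finrank Fq (Submodule.span Fq (Set.range v))

/-- The sum-rank weight of a vector `x ∈ ⊕ᵢ Fqm^{nᵢ}`. -/
noncomputable def srw (Fq : Type) [Field Fq] {Fqm : Type} [Field Fqm] [Algebra Fq Fqm]
    {t : ℕ} {n : Fin t → ℕ} (x : (i : Fin t) → Fin (n i) → Fqm) : ℕ :=
  ∑ i, rk Fq (x i)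

/-- `G` is a generator matrix of the sum-rank metric code `C`. -/
def IsGenMatrix {Fqm : Type} [Field Fqm] {t k : ℕ} {n : Fin t → ℕ}
    (C : Submodule Fqm ((i : Fin t) → Fin (n i) → Fqm))
    (G : Fin k → (i : Fin t) → Fin (n i) → Fqm) : Prop :=
  LinearIndependent Fqm G ∧ Submodule.span Fqm (Set.range G) = C

/-- Nondegeneracy: the columns of each block of a generator matrix are
`Fq`-linearly independent. -/
def Nondeg (Fq : Type) [Field Fq] {Fqm : Type} [Field Fqm] [Algebra Fq Fqm] {t k : ℕ}
    {n : Fin t → ℕ} (G : Fin k → (i : Fin t) → Fin (n i) → Fqm) : Prop :=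
  ∀ i : Fin t, LinearIndependent Fq (fun j : Fin (n i) => fun r : Fin k => G r i j)

/-- A sum-rank metric code is minimal if, whenever the (blockwise) sum-rank support of a
codeword `c'` is contained in the support of a codeword `c`, then `c'` is a scalar
multiple of `c`. -/
def IsMinimal (Fq : Type) [Field Fq] {Fqm : Type} [Field Fqm] [Algebra Fq Fqm] {t : ℕ}
    {n : Fin t → ℕ} (C : Submodule Fqm ((i : Fin t) → Fin (n i) → Fqm)) : Prop :=
  ∀ c ∈ C, ∀ c' ∈ C,
    (∀ i, Submodule.span Fq (Set.range (c' i)) ≤ Submodule.span Fq (Set.range (c i))) →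
    ∃ a : Fqm, c' = a • c

/-- The dual `U^{⊥'}` of an `Fq`-subspace of `Fqm^k`, with respect to the (fixed)
nondegenerate reflexive `Fq`-bilinear form `σ'(x,y) = Tr_{Fqm/Fq}(∑ⱼ xⱼ yⱼ)`. -/
noncomputable def dualPerp (Fq : Type) [Field Fq] {Fqm : Type} [Field Fqm] [Algebra Fq Fqm]
    {k : ℕ} (U : Submodule Fq (Fin k → Fqm)) : Submodule Fq (Fin k → Fqm) where
  carrier := {y | ∀ u ∈ U, Algebra.trace Fq Fqm (∑ j, u j * y j) = 0}
  zero_mem' := by intro u hu; simp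
  add_mem' := by
    intro y z hy hz u hu
    have h : (∑ j, u j * (y + z) j) = (∑ j, u j * y j) + (∑ j, u j * z j) := by
      rw [← Finset.sum_add_distrib]
      exact Finset.sum_congr rfl fun j _ => by simp [mul_add]
    rw [h, map_add, hy u hu, hz u hu, add_zero]
  smul_mem' := by
    intro c y hy u hu
    have h : (∑ j, u j * (c • y) j) = c • (∑ j, u j * y j) := by
      rw [Finset.smul_sum]
      exact Finset.sum_congr rfl fun j _ => by simp [Algebra.mul_smul_comm]
    rw [h, map_smul, hy u hu, smul_zero]

/-- The `Fq`-subspace of `Fqm^k` underlying the `Fqm`-line spanned by `v`. -/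
def lineFq (Fq : Type) [Field Fq] {Fqm : Type} [Field Fqm] [Algebra Fq Fqm]
    {k : ℕ} (v : Fin k → Fqm) : Submodule Fq (Fin k → Fqm) :=
  Submodule.restrictScalars Fq (Submodule.span Fqm {v})

/-- An `Fq`-subspace `U` of `Fqm^k` is scattered if every point of the associated linear
set `L_U` has weight one. -/
noncomputable def Scattered (Fq : Type) [Field Fq] {Fqm : Type} [Field Fqm] [Algebra Fq Fqm]
    {k : ℕ} (U : Submodule Fq (Fin k → Fqm)) : Prop :=
  ∀ v : Fin k → Fqm, v ≠ 0 → Module.finrank Fq ↥(U ⊓ lineFq Fq v) ≤ 1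

/-- Gaussian binomial coefficient with base `Q`. -/
def gaussBinom (Q : ℕ) : ℕ → ℕ → ℕ
  | _, 0 => 1
  | 0, _ + 1 => 0
  | a + 1, b + 1 => gaussBinom Q a b + Q ^ (b + 1) * gaussBinom Q a (b + 1)

/-- The `Fq`-bilinear form `σ'(x, y) = Tr (x ⬝ᵥ y)` on `Fqm^k`, whose orthogonal complement is
`dualPerp`. -/
noncomputable def traceDot (Fq Fqm : Type) [Field Fq] [Field Fqm] [Algebra Fq Fqm] (k : ℕ) :
    LinearMap.BilinForm Fq (Fin k → Fqm) :=
  LinearMap.mk₂ Fq (fun x y => Algebra.trace Fq Fqm (x ⬝ᵥ y))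
    (fun x y z => by simp [add_dotProduct])
    (fun c x y => by simp [smul_dotProduct])
    (fun x y z => by simp [dotProduct_add])
    (fun c x y => by simp [dotProduct_smul])

section

variable {Fq Fqm : Type} [Field Fq] [Field Fqm] [Algebra Fq Fqm] {k : ℕ}

theorem traceDot_apply (x y : Fin k → Fqm) :
    traceDot Fq Fqm k x y = Algebra.trace Fq Fqm (x ⬝ᵥ y) := rfl

theorem traceDot_isSymm : (traceDot Fq Fqm k).IsSymm :=
  ⟨fun x y => by simp [traceDot_apply, dotProduct_comm]⟩

theorem traceDot_nondegenerate [FiniteDimensional Fq Fqm] [Algebra.IsSeparable Fq Fqm] :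
    (traceDot Fq Fqm k).Nondegenerate := by
  have hL : ∀ x : Fin k → Fqm, (∀ y, traceDot Fq Fqm k x y = 0) → x = 0 := by
    intro x hx
    funext j
    -- Testing against vectors supported at `j` reduces to the trace form on `Fqm`.
    refine (traceForm_nondegenerate Fq Fqm).1 (x j) fun c => ?_
    simpa [traceDot_apply] using hx (Pi.single j c)
  exact ⟨hL, fun y hy => hL y fun x => (traceDot_isSymm.eq x y).symm.trans (hy x)⟩

theorem dualPerp_eq_orthogonal (U : Submodule Fq (Fin k → Fqm)) :
    dualPerp Fq U = (traceDot Fq Fqm k).orthogonal U := rfl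

end

/-- If `(U₁,…,U_t)` is an `[(n₁,…,n_t),k]_{q^m/q}`-system whose
intersection contains no `1`-dimensional `Fqm`-subspace, then
`(U₁^{⊥'},…,U_t^{⊥'})` is an `[(km-n₁,…,km-n_t),k]_{q^m/q}`-system. -/
theorem dual_system_is_system
    {Fq Fqm : Type} [Field Fq] [Fintype Fq] [Field Fqm] [Fintype Fqm] [Algebra Fq Fqm]
    {m k t : ℕ} (hm : Module.finrank Fq Fqm = m) (hk : 1 ≤ k) (ht : 1 ≤ t)
    {n : Fin t → ℕ} (U : Fin t → Submodule Fq (Fin k → Fqm))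
    (hdim : ∀ i, Module.finrank Fq ↥(U i) = n i)
    (hspan : Submodule.span Fqm (⋃ i, (U i : Set (Fin k → Fqm))) = ⊤)
    (hint : ∀ v : Fin k → Fqm, (∀ (a : Fqm) (i : Fin t), a • v ∈ U i) → v = 0) :
    (∀ i, Module.finrank Fq ↥(dualPerp Fq (U i)) = k * m - n i) ∧
      Submodule.span Fqm (⋃ i, (dualPerp Fq (U i) : Set (Fin k → Fqm))) = ⊤ := by
  have hnd := traceDot_nondegenerate (Fq := Fq) (Fqm := Fqm) (k := k)
  refine ⟨fun i => ?_, ?_⟩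
  · rw [dualPerp_eq_orthogonal, LinearMap.BilinForm.finrank_orthogonal hnd, hdim i,
      Module.finrank_pi_fintype]
    simp [hm]
  · by_contra hne
    obtain ⟨f, hf0, hf⟩ := Submodule.exists_le_ker_of_lt_top _ (lt_top_iff_ne_top.mpr hne)
    obtain ⟨v, rfl⟩ := (dotProductEquiv Fqm (Fin k)).surjective f
    refine hf0 ?_
    rw [hint v, map_zero]
    intro a i
    rw [← LinearMap.BilinForm.orthogonal_orthogonal hnd traceDot_isSymm.isRefl (U i),
      LinearMap.BilinForm.mem_orthogonal_iff]
    intro y hy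
    have hvy : v ⬝ᵥ y = 0 := by
      simpa using hf (Submodule.subset_span (Set.mem_iUnion.mpr ⟨i, hy⟩))
    rw [traceDot_apply, dotProduct_smul, dotProduct_comm, hvy, smul_zero, map_zero]
end

section
/- Let C be a nondegenerate [(n_1,…,n_t),k]_{q^m/q} sum-rank metric code with associated system (U_1,…,U_t), and suppose U_1 ∩ … ∩ U_t contains no 1-dimensional F_{q^m}-subspace. Then C is a one-weight code (all nonzero codewords have the same sum-rank weight) if and only if the quantity Σ_{i=1}^t dim_{F_q}(U_i^{⊥'} ∩ ⟨w⟩_{F_{q^m}}) takes the same value for every nonzero w ∈ F_{q^m}^k. -/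
/-!
For `v ≠ 0` let `φ : u ↦ ∑ⱼ uⱼ vⱼ`, an `Fq`-linear map `Fqm^k → Fqm`. The `i`-th block of the
codeword `∑ᵣ vᵣ Gᵣ` is the image under `φ` of the columns of the `i`-th block of `G`, so its rank is
`dim φ(Uᵢ)` (`span_codeword_block`). A point `a • v` of the line `⟨v⟩` lies in `Uᵢ^{⊥'}` exactly when
`Tr(a φ(u)) = 0` for all `u ∈ Uᵢ`, so `Uᵢ^{⊥'} ∩ ⟨v⟩` is a copy of the orthogonal of `φ(Uᵢ)` for the
trace form, which is nondegenerate because the extension of finite fields is separable. Hence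
the two dimensions add up to `m` for each `i` (`finrank_dualPerp_inf_lineFq`). Summed over `i`, the
weight of the codeword attached to `v` and the dual weight of the point `⟨v⟩` add up to `t * m`, so
one is constant exactly when the other is.
-/

open Module Submodule

/-- The `Fq`-linear map `u ↦ ∑ⱼ uⱼ vⱼ` from `Fqm^k` to `Fqm`. -/
noncomputable def dotFq (Fq : Type) [Field Fq] {Fqm : Type} [Field Fqm] [Algebra Fq Fqm]
    {k : ℕ} (v : Fin k → Fqm) : (Fin k → Fqm) →ₗ[Fq] Fqm where
  toFun u := ∑ j, u j * v j
  map_add' x y := by simp [add_mul, Finset.sum_add_distrib]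
  map_smul' c x := by simp [Finset.smul_sum]

/-- The trace form identifies `U^{⊥'} ∩ ⟨v⟩` with the orthogonal of the image of `U` under
`u ↦ ∑ⱼ uⱼ vⱼ`. -/
lemma finrank_dualPerp_inf_lineFq {Fq Fqm : Type} [Field Fq] [Fintype Fq] [Field Fqm] [Fintype Fqm]
    [Algebra Fq Fqm] {k : ℕ} (U : Submodule Fq (Fin k → Fqm)) {v : Fin k → Fqm} (hv : v ≠ 0) :
    finrank Fq (U.map (dotFq Fq v)) + finrank Fq ↥(dualPerp Fq U ⊓ lineFq Fq v)
      = finrank Fq Fqm := by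
  set W := U.map (dotFq Fq v)
  have hinj : Function.Injective ((LinearMap.toSpanSingleton Fqm (Fin k → Fqm) v).restrictScalars
      Fq) := smul_left_injective Fqm hv
  have key : dualPerp Fq U ⊓ lineFq Fq v =
      ((Algebra.traceForm Fq Fqm).orthogonal W).map
        ((LinearMap.toSpanSingleton Fqm (Fin k → Fqm) v).restrictScalars Fq) := by
    have hsum : ∀ (a : Fqm) (u : Fin k → Fqm), ∑ j, u j * (a • v) j = (∑ j, u j * v j) * a := by
      intro a u
      rw [Finset.sum_mul]
      exact Finset.sum_congr rfl fun j _ => by simp only [Pi.smul_apply, smul_eq_mul]; ring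
    have hmem : ∀ a : Fqm, a • v ∈ dualPerp Fq U ↔ a ∈ (Algebra.traceForm Fq Fqm).orthogonal W := by
      intro a
      rw [LinearMap.BilinForm.mem_orthogonal_iff]
      constructor
      · rintro h _ ⟨u, hu, rfl⟩
        have := h u hu
        rw [hsum] at this
        exact this
      · intro h u hu
        rw [hsum]
        exact h _ ⟨u, hu, rfl⟩
    ext y
    constructor
    · rintro ⟨h1, h2⟩
      obtain ⟨a, rfl⟩ := Submodule.mem_span_singleton.1 h2
      exact ⟨a, (hmem a).1 h1, rfl⟩
    · rintro ⟨a, ha, rfl⟩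
      exact ⟨(hmem a).2 ha, Submodule.mem_span_singleton.2 ⟨a, rfl⟩⟩
  rw [key, LinearEquiv.finrank_eq (Submodule.equivMapOfInjective _ hinj _).symm]
  have := LinearMap.BilinForm.finrank_orthogonal (traceForm_nondegenerate Fq Fqm) W
  have := Submodule.finrank_le W
  omega

lemma span_codeword_block {Fq Fqm : Type} [Field Fq] [Field Fqm] [Algebra Fq Fqm]
    {k t : ℕ} {n : Fin t → ℕ} (G : Fin k → (i : Fin t) → Fin (n i) → Fqm) (v : Fin k → Fqm)
    (i : Fin t) :
    span Fq (Set.range ((∑ r, v r • G r) i)) =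
      (span Fq (Set.range fun j : Fin (n i) => fun rr : Fin k => G rr i j)).map (dotFq Fq v) := by
  rw [Submodule.map_span, ← Set.range_comp]
  congr 2
  funext j
  simp [dotFq, Finset.sum_apply, mul_comm]

/-- A nondegenerate sum-rank metric code whose associated system
`(U₁,…,U_t)` has intersection containing no `1`-dimensional `Fqm`-subspace is a
one-weight code if and only if `∑ᵢ dim_{Fq}(Uᵢ^{⊥'} ∩ ⟨w⟩_{Fqm})` takes the same value
for every nonzero `w ∈ Fqm^k`. -/
theorem oneWeight_iff_dual_point_weights_constant
    {Fq Fqm : Type} [Field Fq] [Fintype Fq] [Field Fqm] [Fintype Fqm] [Algebra Fq Fqm]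
    {m k t : ℕ} (hm : Module.finrank Fq Fqm = m) (hk : 1 ≤ k) (ht : 1 ≤ t)
    {n : Fin t → ℕ}
    (C : Submodule Fqm ((i : Fin t) → Fin (n i) → Fqm))
    (G : Fin k → (i : Fin t) → Fin (n i) → Fqm)
    (hG : IsGenMatrix C G) (hnd : Nondeg Fq G)
    (U : Fin t → Submodule Fq (Fin k → Fqm))
    (hU : ∀ i, U i =
      Submodule.span Fq (Set.range fun j : Fin (n i) => fun rr : Fin k => G rr i j))
    (hint : ∀ v : Fin k → Fqm, (∀ (a : Fqm) (i : Fin t), a • v ∈ U i) → v = 0) :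
    (∀ c ∈ C, c ≠ 0 → ∀ c' ∈ C, c' ≠ 0 → srw Fq c = srw Fq c')
      ↔ (∀ v v' : Fin k → Fqm, v ≠ 0 → v' ≠ 0 →
          (∑ i, Module.finrank Fq ↥(dualPerp Fq (U i) ⊓ lineFq Fq v))
            = ∑ i, Module.finrank Fq ↥(dualPerp Fq (U i) ⊓ lineFq Fq v')) := by
  have hsum : ∀ v : Fin k → Fqm, v ≠ 0 → srw Fq (∑ r, v r • G r) +
      ∑ i, finrank Fq ↥(dualPerp Fq (U i) ⊓ lineFq Fq v) = ∑ _i : Fin t, finrank Fq Fqm := by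
    intro v hv
    rw [srw, ← Finset.sum_add_distrib]
    refine Finset.sum_congr rfl fun i _ => ?_
    rw [rk, span_codeword_block, ← hU i]
    exact finrank_dualPerp_inf_lineFq (U i) hv
  obtain ⟨hli, hspan⟩ := hG
  constructor
  · intro h v v' hv hv'
    have hC : ∀ v : Fin k → Fqm, ∑ r, v r • G r ∈ C := fun v => by
      rw [← hspan]
      exact (Submodule.mem_span_range_iff_exists_fun Fqm).2 ⟨v, rfl⟩
    have hne : ∀ v : Fin k → Fqm, v ≠ 0 → ∑ r, v r • G r ≠ 0 := fun v hv h0 =>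
      hv (funext (Fintype.linearIndependent_iff.1 hli v h0))
    have := h _ (hC v) (hne v hv) _ (hC v') (hne v' hv')
    have := hsum v hv
    have := hsum v' hv'
    omega
  · intro h c hc hc0 c' hc' hc0'
    rw [← hspan] at hc hc'
    obtain ⟨v, rfl⟩ := (Submodule.mem_span_range_iff_exists_fun Fqm).1 hc
    obtain ⟨v', rfl⟩ := (Submodule.mem_span_range_iff_exists_fun Fqm).1 hc'
    have hv : v ≠ 0 := by rintro rfl; simp at hc0
    have hv' : v' ≠ 0 := by rintro rfl; simp at hc0'
    have := h v v' hv hv'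
    have := hsum v hv
    have := hsum v' hv'
    omega
end

section
/- Let C be a nondegenerate [(n_1,…,n_t),k]_{q^m/q} one-weight sum-rank metric code (all nonzero codewords have the same sum-rank weight d_1(C)) with associated system (U_1,…,U_t), and suppose U_1 ∩ … ∩ U_t contains no 1-dimensional F_{q^m}-subspace. If d_1(C) ≠ tm, then the linear sets L_{U_1^{⊥'}},…,L_{U_t^{⊥'}} cover all of PG(k−1,q^m); that is, for every nonzero w ∈ F_{q^m}^k there exists i with dim_{F_q}(U_i^{⊥'} ∩ ⟨w⟩_{F_{q^m}}) ≥ 1. -/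
/-!
For `v ≠ 0`, the `i`-th block of the codeword `vG` has as entries the scalar products of `v` with
the generators of `Uᵢ`, so its entries span `Wᵢ = {u · v : u ∈ Uᵢ}` over `Fq`. A multiple `a • v`
lies in `Uᵢ^{⊥'}` exactly when `a` is trace-orthogonal to `Wᵢ`; since the trace form is
nondegenerate, `Uᵢ^{⊥'}` misses the point `⟨v⟩` only if `Wᵢ = Fqm`, i.e. the block has full rank `m`
(`exists_trace_orthogonal` gives the nontrivial direction). If every `Uᵢ^{⊥'}` missed `⟨v⟩`, the
nonzero codeword `vG` would therefore have weight `tm`, contradicting `d₁(C) ≠ tm`.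
-/

open Module Submodule

/-- A proper `Fq`-subspace of `Fqm` has a nonzero trace-orthogonal element, because the trace form
of a finite (hence separable) extension is nondegenerate. -/
lemma exists_trace_orthogonal {Fq Fqm : Type} [Field Fq] [Fintype Fq] [Field Fqm] [Fintype Fqm]
    [Algebra Fq Fqm] (W : Submodule Fq Fqm) (hW : W ≠ ⊤) :
    ∃ a : Fqm, a ≠ 0 ∧ ∀ w ∈ W, Algebra.trace Fq Fqm (a * w) = 0 := by
  obtain ⟨f, hf, hWf⟩ := Submodule.exists_le_ker_of_lt_top W hW.lt_top
  -- By nondegeneracy of the trace form, `f` is `w ↦ Tr (a w)` for some `a`.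
  have hB := traceForm_nondegenerate Fq Fqm
  let e := LinearMap.BilinForm.toDual (Algebra.traceForm Fq Fqm) hB
  have he : ∀ w, Algebra.trace Fq Fqm (e.symm f * w) = f w := fun w => by
    rw [← Algebra.traceForm_apply]
    exact LinearMap.BilinForm.apply_toDual_symm_apply (hB := hB) f w
  refine ⟨e.symm f, by simpa using hf, fun w hw => ?_⟩
  rw [he]
  exact hWf hw

/-- If `C` is a nondegenerate one-weight sum-rank metric code with
weight `d₁(C) ≠ tm` whose associated system `(U₁,…,U_t)` has intersection containing no
`1`-dimensional `Fqm`-subspace, then the linear sets `L_{Uᵢ^{⊥'}}` cover all of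
`PG(k-1,q^m)`. -/
theorem dual_linear_sets_cover_of_oneWeight
    {Fq Fqm : Type} [Field Fq] [Fintype Fq] [Field Fqm] [Fintype Fqm] [Algebra Fq Fqm]
    {m k t : ℕ} (hm : Module.finrank Fq Fqm = m) (hk : 1 ≤ k) (ht : 1 ≤ t)
    {n : Fin t → ℕ}
    (C : Submodule Fqm ((i : Fin t) → Fin (n i) → Fqm))
    (G : Fin k → (i : Fin t) → Fin (n i) → Fqm)
    (hG : IsGenMatrix C G) (hnd : Nondeg Fq G)
    (U : Fin t → Submodule Fq (Fin k → Fqm))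
    (hU : ∀ i, U i =
      Submodule.span Fq (Set.range fun j : Fin (n i) => fun rr : Fin k => G rr i j))
    (hint : ∀ v : Fin k → Fqm, (∀ (a : Fqm) (i : Fin t), a • v ∈ U i) → v = 0)
    (hone : ∃ d : ℕ, (∀ c ∈ C, c ≠ 0 → srw Fq c = d) ∧ d ≠ t * m) :
    ∀ v : Fin k → Fqm, v ≠ 0 →
      ∃ i : Fin t, 1 ≤ Module.finrank Fq ↥(dualPerp Fq (U i) ⊓ lineFq Fq v) := by
  obtain ⟨d, hd, hne⟩ := hone
  intro v hv
  by_contra! hcon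
  have hbot : ∀ i, dualPerp Fq (U i) ⊓ lineFq Fq v = ⊥ := fun i =>
    Submodule.finrank_eq_zero.mp (Nat.lt_one_iff.mp (hcon i))
  apply hne
  have hcC : ∑ r, v r • G r ∈ C := by
    rw [← hG.2]
    exact Submodule.sum_mem _ fun r _ =>
      Submodule.smul_mem _ _ (Submodule.subset_span (Set.mem_range_self r))
  have hc0 : ∑ r, v r • G r ≠ 0 := fun h =>
    hv (funext (Fintype.linearIndependent_iff.mp hG.1 v h))
  rw [← hd _ hcC hc0, srw]
  have hrk : ∀ i, rk Fq ((∑ r, v r • G r) i) = m := by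
    intro i
    have htop : Submodule.span Fq (Set.range ((∑ r, v r • G r) i)) = ⊤ := by
      by_contra hW
      obtain ⟨a, ha, hort⟩ := exists_trace_orthogonal _ hW
      have hmem : a • v ∈ dualPerp Fq (U i) ⊓ lineFq Fq v := by
        refine ⟨?_, Submodule.smul_mem _ a (Submodule.mem_span_singleton_self v)⟩
        intro u hu
        rw [hU i] at hu
        induction hu using Submodule.span_induction with
        | mem x hx =>
          obtain ⟨j, rfl⟩ := hx
          rw [← hort _ (Submodule.subset_span (Set.mem_range_self j))]
          congr 1
          simp only [Finset.sum_apply, Pi.smul_apply, smul_eq_mul, Finset.mul_sum]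
          exact Finset.sum_congr rfl fun r _ => by ring
        | zero => simp
        | add x y _ _ hx hy =>
          simp only [Pi.add_apply, add_mul, Finset.sum_add_distrib, map_add, hx, hy, add_zero]
        | smul b x _ hx =>
          simp only [Pi.smul_apply b x, smul_mul_assoc, ← Finset.smul_sum, map_smul, hx, smul_zero]
      rw [hbot i, Submodule.mem_bot] at hmem
      exact (smul_ne_zero ha hv) hmem
    rw [rk, htop, finrank_top, hm]
  rw [Finset.sum_congr rfl fun i _ => hrk i]
  simp
end

section
/- Every nondegenerate sum-rank metric code can be extended to a one-weight code: if C is a nondegenerate [(n_1,…,n_t),k]_{q^m/q} sum-rank metric code with generator matrix G = (G_1|…|G_t), then there exist s ≥ t and further blocks G_{t+1} ∈ F_{q^m}^{k×n_{t+1}},…,G_s ∈ F_{q^m}^{k×n_s}, each with F_q-linearly independent columns, such that the code generated by (G_1|…|G_t|G_{t+1}|…|G_s) is a nondegenerate sum-rank metric code all of whose nonzero codewords have the same sum-rank weight. -/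
/-!
Let `K = Fqm` and let `L : K^k → ⊕ᵢ K^{nᵢ}` be the encoding map of the given generator matrix.
The finite group `Γ = GL(K^k)` acts on generator matrices by change of basis. The extended code has
one block for every pair `(g, i)` with `g ∈ Γ` and `i` an original block; its encoding map sends `x`
to the family of blocks `L (g x) i`. Hence the weight of the codeword of `x` is `∑_g w (L (g x))`.
Since `Γ` is transitive on nonzero vectors (`exists_linearEquiv_apply_eq`), this sum does not depend
on `x ≠ 0` (`sum_linearEquiv_eq`). Changing the basis of `K^k` keeps the columns of a block
`Fq`-linearly independent, and the original blocks are those with `g = 1`; the enumeration of the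
pairs is arranged to start with them (`exists_equiv_extending`).
-/

open Module Submodule

/-- The general linear group is transitive on nonzero vectors. -/
theorem exists_linearEquiv_apply_eq {K V : Type} [Field K] [AddCommGroup V] [Module K V]
    {x y : V} (hx : x ≠ 0) (hy : y ≠ 0) : ∃ g : V ≃ₗ[K] V, g x = y := by
  obtain ⟨g, hg⟩ := Submodule.exists_linearEquiv_restrict_eq
    ((LinearEquiv.toSpanNonzeroSingleton K V x hx).symm.trans
      (LinearEquiv.toSpanNonzeroSingleton K V y hy))
  refine ⟨g, ?_⟩
  have h := hg (LinearEquiv.toSpanNonzeroSingleton K V x hx 1)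
  rw [LinearEquiv.trans_apply, LinearEquiv.symm_apply_apply] at h
  simpa using h.symm

/-- A function on a vector space, summed along the orbit map `g ↦ g x` of the general linear group,
gives the same value for all nonzero `x`. -/
theorem sum_linearEquiv_eq {K V : Type} [Field K] [AddCommGroup V] [Module K V]
    [Fintype (V ≃ₗ[K] V)] (f : V → ℕ) {x y : V} (hx : x ≠ 0) (hy : y ≠ 0) :
    ∑ g : V ≃ₗ[K] V, f (g x) = ∑ g : V ≃ₗ[K] V, f (g y) := by
  obtain ⟨h, rfl⟩ := exists_linearEquiv_apply_eq (K := K) hx hy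
  exact (Fintype.sum_equiv (Equiv.mulRight h) _ _ fun g => by simp).symm

/-- An injection of `Fin t` into a finite type extends to an enumeration of that type. -/
theorem exists_equiv_extending {α : Type} [Fintype α] {t : ℕ} (f : Fin t ↪ α) :
    ∃ (s : ℕ) (hts : t ≤ s) (E : Fin s ≃ α), ∀ i, E (Fin.castLE hts i) = f i := by
  have hts : t ≤ Fintype.card α := by simpa using Fintype.card_le_of_embedding f
  let E₀ := (Fintype.equivFin α).symm
  -- Permutations of `α` act transitively on embeddings of `Fin t`, so any enumeration can be
  -- corrected to start with `f`.
  have := Equiv.Perm.isMultiplyPretransitive α t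
  obtain ⟨σ, hσ⟩ := MulAction.exists_smul_eq (Equiv.Perm α)
    ((Fin.castLEEmb hts).trans E₀.toEmbedding) f
  refine ⟨_, hts, E₀.trans σ, fun i => ?_⟩
  simpa using DFunLike.congr_fun hσ i

/-- `Fq`-linear independence of the columns `j ↦ (r ↦ M (eᵣ) j)` of a `K`-linear map `M` is
preserved by a change of basis `g` of the domain. -/
theorem linearIndependent_columns_comp {Fq K : Type} [Field Fq] [Field K] [Algebra Fq K]
    {k m : ℕ} (M : (Fin k → K) →ₗ[K] (Fin m → K)) (g : (Fin k → K) ≃ₗ[K] (Fin k → K))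
    (h : LinearIndependent Fq fun j : Fin m => fun r : Fin k => M (Pi.single r 1) j) :
    LinearIndependent Fq fun j : Fin m => fun r : Fin k => M (g (Pi.single r 1)) j := by
  rw [Fintype.linearIndependent_iff] at h ⊢
  intro a ha
  apply h a
  -- A relation between the columns of `M` is the vanishing of the functional `φ` on `K^k`.
  let φ : (Fin k → K) →ₗ[K] K :=
    (∑ j, algebraMap Fq K (a j) • LinearMap.proj (R := K) (φ := fun _ : Fin m => K) j) ∘ₗ M
  have hφ : ∀ y, φ y = ∑ j, a j • M y j := by
    intro y
    simp [φ, Algebra.smul_def]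
  have h0 : φ ∘ₗ g.toLinearMap = 0 := by
    apply (Pi.basisFun K (Fin k)).ext
    intro r
    simpa [hφ] using congrFun ha r
  funext r
  have h1 := LinearMap.congr_fun h0 (g.symm (Pi.single r 1))
  simpa [hφ] using h1

/-- Every nondegenerate sum-rank metric code can be extended, by
adjoining further blocks (each with `Fq`-linearly independent columns), to a
nondegenerate sum-rank metric code all of whose nonzero codewords have the same
sum-rank weight. -/
theorem extends_to_oneWeight
    {Fq Fqm : Type} [Field Fq] [Fintype Fq] [Field Fqm] [Fintype Fqm] [Algebra Fq Fqm]
    {t k : ℕ} (ht : 1 ≤ t) (hk : 1 ≤ k) {n : Fin t → ℕ} (hn : ∀ i, 1 ≤ n i)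
    (C : Submodule Fqm ((i : Fin t) → Fin (n i) → Fqm))
    (G : Fin k → (i : Fin t) → Fin (n i) → Fqm)
    (hG : IsGenMatrix C G) (hnd : Nondeg Fq G) :
    ∃ (s : ℕ) (hts : t ≤ s) (n' : Fin s → ℕ)
      (hn' : ∀ i : Fin t, n' (Fin.castLE hts i) = n i)
      (C' : Submodule Fqm ((i : Fin s) → Fin (n' i) → Fqm))
      (G' : Fin k → (i : Fin s) → Fin (n' i) → Fqm),
      IsGenMatrix C' G' ∧ Nondeg Fq G' ∧
      (∀ (r : Fin k) (i : Fin t) (j : Fin (n i)),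
        G' r (Fin.castLE hts i) (Fin.cast (hn' i).symm j) = G r i j) ∧
      ∃ d : ℕ, ∀ c ∈ C', c ≠ 0 → srw Fq c = d := by
  classical
  let V := Fin k → Fqm
  let L : V →ₗ[Fqm] ((i : Fin t) → Fin (n i) → Fqm) := Fintype.linearCombination Fqm G
  have hL : ∀ r, L (Pi.single r 1) = G r := fun r =>
    (Fintype.linearCombination_apply_single Fqm G r 1).trans (one_smul _ _)
  have hLinj : Function.Injective L :=
    linearIndependent_iff_injective_fintypeLinearCombination.mp hG.1
  have : Finite (V ≃ₗ[Fqm] V) := DFunLike.finite _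
  let _ : Fintype (V ≃ₗ[Fqm] V) := Fintype.ofFinite _
  obtain ⟨s, hts, E, hE⟩ := exists_equiv_extending
    (⟨fun i => (1, i), fun _ _ h => (Prod.mk.inj h).2⟩ : Fin t ↪ (V ≃ₗ[Fqm] V) × Fin t)
  replace hE : ∀ i, E (Fin.castLE hts i) = (1, i) := hE
  let enc : V →ₗ[Fqm] ((i : Fin s) → Fin (n (E i).2) → Fqm) :=
    LinearMap.pi fun i => LinearMap.proj (E i).2 ∘ₗ L ∘ₗ (E i).1.toLinearMap
  have henc : ∀ x i, enc x i = L ((E i).1 x) (E i).2 := fun _ _ => rfl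
  -- A vector killed by `enc` is killed by `L`, because the blocks `(1, i)` occur in `enc`.
  have hinj : Function.Injective enc := by
    rw [injective_iff_map_eq_zero]
    intro x hx
    apply (injective_iff_map_eq_zero L).mp hLinj
    funext i
    have h := congrFun hx (E.symm (1, i))
    rw [henc] at h
    have key : ∀ p : (V ≃ₗ[Fqm] V) × Fin t, p = (1, i) → L (p.1 x) p.2 = 0 → L x i = 0 := by
      rintro _ rfl h
      exact h
    exact key _ (E.apply_symm_apply _) h
  refine ⟨s, hts, fun i => n (E i).2, fun i => by simp only [hE], LinearMap.range enc,
    fun r => enc (Pi.single r 1), ⟨?_, ?_⟩, ?_, ?_, ?_⟩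
  · have h := (Pi.basisFun Fqm (Fin k)).linearIndependent.map' enc (LinearMap.ker_eq_bot.mpr hinj)
    simpa [Function.comp_def] using h
  · have h := (Pi.basisFun Fqm (Fin k)).span_eq
    rw [LinearMap.range_eq_map, ← h, Submodule.map_span, ← Set.range_comp]
    simp [Function.comp_def]
  · intro i
    apply linearIndependent_columns_comp (LinearMap.proj (E i).2 ∘ₗ L) (E i).1
    simpa [hL] using hnd (E i).2
  · intro r i j
    have key : ∀ (p : (V ≃ₗ[Fqm] V) × Fin t) (_ : p = (1, i)) (h : n i = n p.2),
        L (p.1 (Pi.single r 1)) p.2 (Fin.cast h j) = G r i j := by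
      rintro _ rfl h
      exact congrFun (congrFun (hL r) i) j
    exact key _ (hE i) _
  · have hw : ∀ x, srw Fq (enc x) = ∑ g : V ≃ₗ[Fqm] V, srw Fq (L (g x)) := by
      intro x
      simp only [srw, henc]
      rw [← Fintype.sum_prod_type']
      exact Fintype.sum_equiv E _ _ fun _ => rfl
    have he : (Pi.single ⟨0, hk⟩ 1 : V) ≠ 0 := by simp
    refine ⟨srw Fq (enc (Pi.single ⟨0, hk⟩ 1)), ?_⟩
    rintro _ ⟨x, rfl⟩ hx
    have hx0 : x ≠ 0 := by
      rintro rfl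
      exact hx (map_zero enc)
    rw [hw, hw]
    exact sum_linearEquiv_eq (fun y => srw Fq (L y)) hx0 he
end

section
/- Let C be a nondegenerate [(mk−n_1,…,mk−n_t),k]_{q^m/q} sum-rank metric code whose nonzero codewords have exactly the two sum-rank weights tm and tm−1, and let (V_1,…,V_t) be any associated system. Then the dual subspaces V_1^{⊥'},…,V_t^{⊥'} are scattered F_q-subspaces of F_{q^m}^k of dimensions n_1,…,n_t whose linear sets L_{V_1^{⊥'}},…,L_{V_t^{⊥'}} are pairwise disjoint. -/
/-!
For `x : Fqm^k` write `w_i(x)` for the `Fq`-dimension of `V_i^{⊥'} ∩ ⟨x⟩`, and let `xG` be the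
codeword `∑ r, x_r G_r`. The entries of its `i`-th block span the image of `V_i` under `y ↦ x · y`,
and the orthogonal of that image for the trace form of `Fqm / Fq` is `{a | a x ∈ V_i^{⊥'}}`. Hence
`rk (xG)_i + w_i(x) = m` for `x ≠ 0` (`rk_add_finrank_dualPerp_inf_line`), and summing over the
blocks gives `srw (xG) + ∑ i, w_i(x) = t m`. As all nonzero weights are at least `t m - 1`, we get
`∑ i, w_i(x) ≤ 1` for every `x ≠ 0`, which says at once that every `V_i^{⊥'}` is scattered and that
no point lies on two of the linear sets. The dimension formula is nondegeneracy of the form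
`Tr (∑ j, x_j y_j)`, once `n_i ≤ m k` is known; otherwise `V_i = 0` and `w_i(x) = m ≥ 2`.
-/


open Module Submodule

/-- The `Fq`-bilinear form `σ'(x, y) = Tr (∑ j, x_j y_j)` on `Fqm^k`. -/
noncomputable def trDot (Fq Fqm : Type) [Field Fq] [Field Fqm] [Algebra Fq Fqm] (k : ℕ) :
    LinearMap.BilinForm Fq (Fin k → Fqm) :=
  LinearMap.mk₂ Fq (fun x y => Algebra.trace Fq Fqm (∑ j, x j * y j))
    (fun x x' y => by simp [add_mul, Finset.sum_add_distrib])
    (fun c x y => by simp [← Finset.smul_sum])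
    (fun x y y' => by simp [mul_add, Finset.sum_add_distrib])
    (fun c x y => by simp [← Finset.smul_sum])

section
variable {Fq Fqm : Type} [Field Fq] [Field Fqm] [Algebra Fq Fqm]

lemma trDot_isRefl (k : ℕ) : LinearMap.IsRefl (trDot Fq Fqm k) := by
  intro x y h
  simpa [trDot, mul_comm] using h

variable [Fintype Fq] [Fintype Fqm]

/-- If `Tr (∑ j, x_j y_j) = 0` for all `y`, testing on `y = a e_j` reduces `x_j = 0` to
nondegeneracy of the trace form of the separable extension `Fqm / Fq`. -/
lemma trDot_nondegenerate (k : ℕ) : (trDot Fq Fqm k).Nondegenerate := by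
  refine (LinearMap.IsRefl.nondegenerate_iff_separatingLeft (trDot_isRefl k)).2 ?_
  intro x hx
  ext j
  refine (traceForm_nondegenerate Fq Fqm).1 (x j) fun a => ?_
  have := hx (Pi.single j a)
  simpa [trDot, Algebra.traceForm_apply, Pi.single_apply, -map_sum] using this

lemma finrank_add_finrank_dualPerp {k : ℕ} (U : Submodule Fq (Fin k → Fqm)) :
    finrank Fq U + finrank Fq (dualPerp Fq U) = finrank Fq Fqm * k := by
  have h : dualPerp Fq U = (trDot Fq Fqm k).orthogonal U := by
    ext y
    simp [dualPerp, trDot, LinearMap.BilinForm.mem_orthogonal_iff]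
  have h1 := LinearMap.BilinForm.finrank_orthogonal (trDot_nondegenerate k) U
  have h2 : finrank Fq (Fin k → Fqm) = finrank Fq Fqm * k := by
    rw [← Module.finrank_mul_finrank Fq Fqm (Fin k → Fqm), Module.finrank_fin_fun]
  have h3 := Submodule.finrank_le U
  rw [h, h1]
  omega

/-- The rank of the block of `xG` whose columns in `G` are the `g j` falls short of `m` by the
weight of the point `⟨x⟩` in the linear set of the dual of the column span. -/
lemma rk_add_finrank_dualPerp_inf_line {k N : ℕ} (g : Fin N → Fin k → Fqm)
    {x : Fin k → Fqm} (hx : x ≠ 0) :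
    rk Fq (fun j => ∑ r, x r * g j r) +
      finrank Fq ↥(dualPerp Fq (span Fq (Set.range g)) ⊓ lineFq Fq x) = finrank Fq Fqm := by
  set W := span Fq (Set.range fun j => ∑ r, x r * g j r) with hW
  let f : Fqm →ₗ[Fq] (Fin k → Fqm) := (LinearMap.toSpanSingleton Fqm _ x).restrictScalars Fq
  have hf : Function.Injective f := fun a b h => smul_left_injective Fqm hx (by simpa [f] using h)
  have key : dualPerp Fq (span Fq (Set.range g)) ⊓ lineFq Fq x =
      ((Algebra.traceForm Fq Fqm).orthogonal W).map f := by
    let φ : (Fin k → Fqm) →ₗ[Fq] Fqm :=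
      { toFun := fun y => ∑ r, x r * y r
        map_add' := by intro y z; simp [mul_add, Finset.sum_add_distrib]
        map_smul' := by intro c y; simp [Finset.smul_sum] }
    have hWm : W = (span Fq (Set.range g)).map φ := by
      rw [Submodule.map_span, ← Set.range_comp]; rfl
    have hmem : ∀ a : Fqm, a • x ∈ dualPerp Fq (span Fq (Set.range g)) ↔
        a ∈ (Algebra.traceForm Fq Fqm).orthogonal W := by
      intro a
      rw [hWm, LinearMap.BilinForm.mem_orthogonal_iff]
      have e : ∀ u : Fin k → Fqm, ∑ j, u j * (a • x) j = φ u * a := by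
        intro u
        simp only [φ, LinearMap.coe_mk, AddHom.coe_mk, Finset.sum_mul, Pi.smul_apply, smul_eq_mul]
        exact Finset.sum_congr rfl fun j _ => by ring
      change (∀ u ∈ span Fq (Set.range g), Algebra.trace Fq Fqm (∑ j, u j * (a • x) j) = 0) ↔ _
      simp only [e, Submodule.mem_map, Algebra.traceForm_apply,
        forall_exists_index, and_imp, forall_apply_eq_imp_iff₂]
    ext y
    simp only [lineFq, Submodule.mem_inf, Submodule.restrictScalars_mem,
      Submodule.mem_span_singleton, Submodule.mem_map]
    constructor
    · rintro ⟨hy, a, rfl⟩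
      exact ⟨a, (hmem a).1 hy, rfl⟩
    · rintro ⟨a, ha, rfl⟩
      exact ⟨(hmem a).2 ha, a, rfl⟩
  have h1 := LinearMap.BilinForm.finrank_orthogonal (traceForm_nondegenerate Fq Fqm) W
  have h3 := Submodule.finrank_le W
  rw [key, (Submodule.equivMapOfInjective f hf _).finrank_eq.symm, h1]
  change finrank Fq W + _ = _
  omega

end

/-- Converse of the two-weight construction: if a nondegenerate
`[(mk-n₁,…,mk-n_t),k]_{q^m/q}` code has exactly the two nonzero weights `tm` and `tm-1`,
then for any associated system `(V₁,…,V_t)`, the duals `Vᵢ^{⊥'}` are scattered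
`Fq`-subspaces of dimensions `nᵢ` whose linear sets are pairwise disjoint. -/
theorem two_weight_characterization
    {Fq Fqm : Type} [Field Fq] [Fintype Fq] [Field Fqm] [Fintype Fqm] [Algebra Fq Fqm]
    {m k t : ℕ} (hm : Module.finrank Fq Fqm = m) (hm2 : 2 ≤ m) (hk : 2 ≤ k) (ht : 1 ≤ t)
    {n : Fin t → ℕ} (hn : ∀ i, 1 ≤ n i)
    (C : Submodule Fqm ((i : Fin t) → Fin (m * k - n i) → Fqm))
    (G : Fin k → (i : Fin t) → Fin (m * k - n i) → Fqm)
    (hG : IsGenMatrix C G) (hnd : Nondeg Fq G)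
    (V : Fin t → Submodule Fq (Fin k → Fqm))
    (hV : ∀ i, V i = Submodule.span Fq
      (Set.range fun j : Fin (m * k - n i) => fun rr : Fin k => G rr i j))
    (hw : ∀ c ∈ C, c ≠ 0 → srw Fq c = t * m ∨ srw Fq c = t * m - 1)
    (hex1 : ∃ c ∈ C, c ≠ 0 ∧ srw Fq c = t * m)
    (hex2 : ∃ c ∈ C, c ≠ 0 ∧ srw Fq c = t * m - 1) :
    (∀ i, Module.finrank Fq ↥(dualPerp Fq (V i)) = n i) ∧
    (∀ i, Scattered Fq (dualPerp Fq (V i))) ∧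
    (∀ i j : Fin t, i ≠ j → ∀ v : Fin k → Fqm, v ≠ 0 →
      dualPerp Fq (V i) ⊓ lineFq Fq v = ⊥ ∨ dualPerp Fq (V j) ⊓ lineFq Fq v = ⊥) := by
  have hsum : ∀ x : Fin k → Fqm, x ≠ 0 →
      ∑ i, finrank Fq ↥(dualPerp Fq (V i) ⊓ lineFq Fq x) ≤ 1 := by
    intro x hx
    have hcC : ∑ r, x r • G r ∈ C := by
      rw [← hG.2]
      exact Submodule.sum_mem _ fun r _ => Submodule.smul_mem _ _ (subset_span ⟨r, rfl⟩)
    have hc0 : ∑ r, x r • G r ≠ 0 := fun h =>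
      hx (funext fun r => Fintype.linearIndependent_iff.1 hG.1 x h r)
    have hblock : ∀ i, rk Fq ((∑ r, x r • G r) i) +
        finrank Fq ↥(dualPerp Fq (V i) ⊓ lineFq Fq x) = m := by
      intro i
      have h := rk_add_finrank_dualPerp_inf_line (Fq := Fq) (fun j rr => G rr i j) hx
      rw [← hV i, hm] at h
      have hc : (∑ r, x r • G r) i = fun j => ∑ r, x r * G r i j := by
        ext j
        simp
      rwa [hc]
    have htot : srw Fq (∑ r, x r • G r) +
        ∑ i, finrank Fq ↥(dualPerp Fq (V i) ⊓ lineFq Fq x) = t * m := by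
      rw [srw, ← Finset.sum_add_distrib, Finset.sum_congr rfl fun i _ => hblock i]
      simp
    rcases hw _ hcC hc0 with h | h <;> omega
  have hle : ∀ i, ∀ x : Fin k → Fqm, x ≠ 0 →
      finrank Fq ↥(dualPerp Fq (V i) ⊓ lineFq Fq x) ≤ 1 := fun i x hx =>
    (Finset.single_le_sum (f := fun i => finrank Fq ↥(dualPerp Fq (V i) ⊓ lineFq Fq x))
      (fun _ _ => Nat.zero_le _) (Finset.mem_univ i)).trans (hsum x hx)
  refine ⟨fun i => ?_, hle, fun i j hij v hv => ?_⟩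
  · have hdim : finrank Fq (V i) = m * k - n i := by
      rw [hV i, finrank_span_eq_card (hnd i), Fintype.card_fin]
    have hadd := finrank_add_finrank_dualPerp (V i)
    rw [hm] at hadd
    -- If `m k ≤ n i`, the truncated block length is `0`, so this block has rank `0` everywhere.
    have hlt : n i < m * k := by
      by_contra hge
      have hx : (fun _ => 1 : Fin k → Fqm) ≠ 0 := fun h =>
        one_ne_zero (congrFun h ⟨0, by omega⟩)
      have h := rk_add_finrank_dualPerp_inf_line (Fq := Fq) (fun j rr => G rr i j) hx
      rw [← hV i, hm] at h
      have h1 := hle i _ hx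
      have h0 : rk Fq (fun j => ∑ r : Fin k, (1 : Fqm) * G r i j) = 0 := by
        have := finrank_range_le_card (R := Fq) (fun j => ∑ r : Fin k, (1 : Fqm) * G r i j)
        rw [Fintype.card_fin] at this
        change rk Fq (fun j => ∑ r : Fin k, (1 : Fqm) * G r i j) ≤ _ at this
        omega
      omega
    omega
  · have h2 : finrank Fq ↥(dualPerp Fq (V i) ⊓ lineFq Fq v) +
        finrank Fq ↥(dualPerp Fq (V j) ⊓ lineFq Fq v) ≤ 1 := by
      refine le_trans ?_ (hsum v hv)
      rw [← Finset.sum_pair hij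
        (f := fun i => finrank Fq ↥(dualPerp Fq (V i) ⊓ lineFq Fq v))]
      exact Finset.sum_le_sum_of_subset (Finset.subset_univ _)
    rw [← Submodule.finrank_eq_zero (R := Fq), ← Submodule.finrank_eq_zero (R := Fq)]
    omega
end
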